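/- Let S = (S_α)_{α ∈ ℕ₀ⁿ} be a sequence of symmetric matrices in M_t(ℝ). Then S is a matrix-valued [-1,1]ⁿ-moment sequence if and only if Σ_{β ∈ ℕ₀^{2n}, β ≤ α} (-1)^{e(β)} C(α,β) tr(G S_{π(β)}) ≥ 0 for all positive definite matrices G ∈ M_t(ℝ) and all α ∈ ℕ₀^{2n}, where for α = (α₁,…,α_{2n}) and β = (β₁,…,β_{2n}): β ≤ α means β_i ≤ α_i for all i; C(α,β) = C(α₁,β₁)⋯C(α_{2n},β_{2n}) is a product of binomial coefficients; e(β) = Σ_{i=1}^{n} β_{2i}; and π(β) = (β₁+β₂, β₃+β₄, …, β_{2n-1}+β_{2n}) ∈ ℕ₀ⁿ is the multi-index arising from expanding (1+X₁)^{α₁}(1-X₁)^{α₂}⋯(1+Xₙ)^{α_{2n-1}}(1-Xₙ)^{α_{2n}}. -/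

import Mathlib

open MeasureTheory

/-- Integral of a real function against a finite signed measure (via Jordan decomposition). -/
noncomputable def sInt {α : Type*} [MeasurableSpace α] (s : SignedMeasure α) (f : α → ℝ) : ℝ :=
  (∫ x, f x ∂s.toJordanDecomposition.posPart) - ∫ x, f x ∂s.toJordanDecomposition.negPart

/-- A matrix-valued measure (a `t × t` matrix of finite signed Borel measures on `ℝⁿ`)
is positive semidefinite if its value on every Borel set is a positive semidefinite matrix. -/
def IsPSDMatMeas {n t : ℕ} (E : Fin t → Fin t → SignedMeasure (Fin n → ℝ)) : Prop :=
  ∀ A : Set (Fin n → ℝ), MeasurableSet A → (Matrix.of fun i j => E i j A).PosSemidef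

/-- The support of the matrix-valued measure `E` is contained in the closed set `K`:
each entry (as a signed measure) vanishes in total variation outside of `K`. -/
def SuppSubset {n t : ℕ} (E : Fin t → Fin t → SignedMeasure (Fin n → ℝ))
    (K : Set (Fin n → ℝ)) : Prop :=
  ∀ i j, (E i j).totalVariation Kᶜ = 0


/-- `S` is a matrix-valued `K`-moment sequence: there is a positive semidefinite matrix-valued
measure `E` supported in `K` with `S α = ∫ x^α dE(x)` entrywise. -/
def IsMatMomentSeq {n t : ℕ} (S : (Fin n → ℕ) → Matrix (Fin t) (Fin t) ℝ)
    (K : Set (Fin n → ℝ)) : Prop :=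
  ∃ E : Fin t → Fin t → SignedMeasure (Fin n → ℝ), IsPSDMatMeas E ∧ SuppSubset E K ∧
    ∀ (α : Fin n → ℕ) i j, S α i j = sInt (E i j) fun x => ∏ k, x k ^ α k


lemma expand_prod {R : Type*} [CommRing R] {n : ℕ} (x : Fin n → R) (α : Fin n → ℕ × ℕ) :
    ∏ k, ((1 + x k) ^ (α k).1 * (1 - x k) ^ (α k).2) =
      ∑ β ∈ Finset.Iic α, (-1 : R) ^ (∑ k, (β k).2) *
        (∏ k, ((α k).1.choose (β k).1 : R) * ((α k).2.choose (β k).2 : R)) *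
        ∏ k, x k ^ ((β k).1 + (β k).2) := by
  have h1 : ∀ k, (1 + x k) ^ (α k).1 * (1 - x k) ^ (α k).2 =
      ∑ b ∈ Finset.Iic (α k), (-1 : R) ^ b.2 *
        (((α k).1.choose b.1 : R) * ((α k).2.choose b.2 : R)) * x k ^ (b.1 + b.2) := by
    intro k
    obtain ⟨a, b⟩ := α k
    rw [← Finset.Iic_product_Iic, Finset.sum_product, sub_eq_add_neg, add_comm 1, add_comm 1,
      add_pow, add_pow, Finset.sum_mul_sum, ← Nat.range_succ_eq_Iic, ← Nat.range_succ_eq_Iic]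
    refine Finset.sum_congr rfl fun i _ => Finset.sum_congr rfl fun j _ => ?_
    rw [neg_pow]
    ring
  simp_rw [h1]
  rw [Finset.prod_univ_sum]
  refine Finset.sum_congr ?_ fun β _ => ?_
  · ext β; simp [Fintype.mem_piFinset, Pi.le_def]
  · simp [Finset.prod_mul_distrib, Finset.prod_pow_eq_pow_sum]

lemma bern_univ {R : Type*} [CommRing R] (y z : R) (N m : ℕ) (hm : m ≤ N) :
    ∑ k ∈ Finset.range (N + 1), ((k.choose m : ℕ) : R) * ((N.choose k : R) * y ^ k * z ^ (N - k)) =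
      (N.choose m : R) * (y ^ m * (y + z) ^ (N - m)) := by
  obtain ⟨d, rfl⟩ := Nat.exists_eq_add_of_le hm
  rw [add_assoc, Finset.sum_range_add, Finset.sum_eq_zero, zero_add, add_pow, Finset.mul_sum,
    Finset.mul_sum]
  · rw [show m + d - m = d by omega]
    refine Finset.sum_congr rfl fun k hk => ?_
    have h := Nat.choose_mul (n := m + d) (k := m + k) (s := m) (by omega)
    rw [show m + d - m = d by omega, show m + k - m = k by omega] at h
    have h' : ((m + d).choose (m + k) : R) * ((m + k).choose m : R)
        = (m + d).choose m * d.choose k := by exact_mod_cast congrArg (Nat.cast (R := R)) h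
    rw [show m + d - (m + k) = d - k by omega, pow_add]
    linear_combination y ^ m * y ^ k * z ^ (d - k) * h'
  · intro k hk
    rw [Nat.choose_eq_zero_of_lt (Finset.mem_range.1 hk)]
    simp

lemma abs_prod_sub_le {ι : Type*} (s : Finset ι) (a b : ι → ℝ) (ha : ∀ i ∈ s, |a i| ≤ 1)
    (hb : ∀ i ∈ s, |b i| ≤ 1) : |∏ i ∈ s, a i - ∏ i ∈ s, b i| ≤ ∑ i ∈ s, |a i - b i| := by
  classical
  induction s using Finset.induction_on with
  | empty => simp
  | insert i s hi ih =>
    rw [Finset.prod_insert hi, Finset.prod_insert hi, Finset.sum_insert hi]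
    have ih' := ih (fun j hj => ha j (Finset.mem_insert_of_mem hj))
      (fun j hj => hb j (Finset.mem_insert_of_mem hj))
    have h1 : |∏ j ∈ s, a j| ≤ 1 := by
      rw [Finset.abs_prod]
      exact Finset.prod_le_one (fun _ _ => abs_nonneg _)
        (fun j hj => ha j (Finset.mem_insert_of_mem hj))
    have h2 := hb i (Finset.mem_insert_self i s)
    calc |a i * ∏ j ∈ s, a j - b i * ∏ j ∈ s, b j|
        = |(a i - b i) * ∏ j ∈ s, a j + b i * (∏ j ∈ s, a j - ∏ j ∈ s, b j)| := by ring_nf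
      _ ≤ |a i - b i| * |∏ j ∈ s, a j| + |b i| * |∏ j ∈ s, a j - ∏ j ∈ s, b j| := by
          rw [← abs_mul, ← abs_mul]; exact abs_add_le _ _
      _ ≤ |a i - b i| * 1 + 1 * |∏ j ∈ s, a j - ∏ j ∈ s, b j| := by gcongr
      _ ≤ _ := by linarith

lemma choose_ratio (N k m : ℕ) :
    (k.choose m : ℝ) / (N.choose m : ℝ) = ∏ j ∈ Finset.range m, ((k : ℝ) - j) / ((N : ℝ) - j) := by
  have key : ∀ a : ℕ, (a.choose m : ℝ) * (m.factorial : ℝ) = ∏ j ∈ Finset.range m, ((a : ℝ) - j) := by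
    intro a
    have h := Nat.descFactorial_eq_factorial_mul_choose a m
    rw [mul_comm, ← Nat.cast_mul, ← h, ← descPochhammer_eval_eq_descFactorial,
      descPochhammer_eval_eq_prod_range]
  rw [Finset.prod_div_distrib, ← key, ← key]
  have : (m.factorial : ℝ) ≠ 0 := by positivity
  field_simp

lemma choose_ratio_approx (N k m : ℕ) (hm : 2 * m < N) (hk : k ≤ N) :
    |(k.choose m : ℝ) / (N.choose m : ℝ) - ((k : ℝ) / N) ^ m| ≤ m * (m / ((N : ℝ) - m)) := by
  rw [choose_ratio N k m, ← Finset.card_range m, ← Finset.prod_const, Finset.card_range]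
  have hN : (0 : ℝ) < N := by exact_mod_cast (by omega : 0 < N)
  have hmN : (2 : ℝ) * m < N := by exact_mod_cast hm
  have hkN : (k : ℝ) ≤ N := by exact_mod_cast hk
  have hk0 : (0 : ℝ) ≤ k := by positivity
  have hm0 : (0 : ℝ) ≤ m := by positivity
  refine (abs_prod_sub_le _ _ _ ?_ ?_).trans ?_
  · intro j hj
    have hj' : (j : ℝ) ≤ m := by exact_mod_cast (Finset.mem_range.1 hj).le
    have hj0 : (0 : ℝ) ≤ j := by positivity
    rw [abs_div, abs_of_pos (by linarith : (0:ℝ) < N - j), div_le_one (by linarith), abs_le]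
    constructor <;> linarith
  · intro j hj
    rw [abs_of_nonneg (by positivity), div_le_one hN]
    exact hkN
  · have : ∀ j ∈ Finset.range m, |((k : ℝ) - j) / ((N : ℝ) - j) - k / N| ≤ m / ((N : ℝ) - m) := by
      intro j hj
      have hj' : (j : ℝ) ≤ m := by exact_mod_cast (Finset.mem_range.1 hj).le
      have hj0 : (0 : ℝ) ≤ j := by positivity
      have hNj : (0 : ℝ) < N - j := by linarith
      have : ((k : ℝ) - j) / ((N : ℝ) - j) - k / N = -((j / (N - j)) * ((N - k) / N)) := by
        field_simp
        ring
      rw [this, abs_neg, abs_of_nonneg (mul_nonneg (by positivity) (div_nonneg (by linarith) hN.le))]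
      calc (j : ℝ) / (N - j) * ((N - k) / N) ≤ j / (N - j) * 1 := by
            gcongr
            rw [div_le_one hN]; linarith
        _ ≤ m / (N - m) := by
            rw [mul_one]
            gcongr
            linarith
    refine (Finset.sum_le_sum this).trans ?_
    simp

lemma ultra_rmk {X : Type*} [TopologicalSpace X] [T2Space X] [CompactSpace X] [MeasurableSpace X]
    [BorelSpace X] (Λ : ℕ → (C(X, ℝ) →ₗ[ℝ] ℝ)) (hpos : ∀ N f, (∀ x, 0 ≤ f x) → 0 ≤ Λ N f)
    (C : ℝ) (hC : ∀ N, Λ N 1 ≤ C) :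
    ∃ μ : Measure X, IsFiniteMeasure μ ∧
      ∀ f : C(X, ℝ), Filter.Tendsto (fun N => Λ N f) (Filter.hyperfilter ℕ) (nhds (∫ x, f x ∂μ)) := by
  have hbd : ∀ f : C(X, ℝ), ∀ N, Λ N f ∈ Set.Icc (-(‖f‖ * C)) (‖f‖ * C) := by
    intro f N
    have h1 : 0 ≤ Λ N (‖f‖ • 1 - f) := hpos _ _ fun x => by
      simpa using (le_abs_self _).trans (f.norm_coe_le_norm x)
    have h2 : 0 ≤ Λ N (‖f‖ • 1 + f) := hpos _ _ fun x => by
      have := (neg_le_abs _).trans (f.norm_coe_le_norm x)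
      simp; linarith
    rw [map_sub, map_smul, smul_eq_mul] at h1
    rw [map_add, map_smul, smul_eq_mul] at h2
    have h3 := mul_le_mul_of_nonneg_left (hC N) (norm_nonneg f)
    constructor <;> linarith
  have hlim : ∀ f : C(X, ℝ), ∃ l : ℝ,
      Filter.Tendsto (fun N => Λ N f) (Filter.hyperfilter ℕ) (nhds l) := by
    intro f
    obtain ⟨l, -, hl⟩ := (isCompact_Icc (a := -(‖f‖ * C)) (b := ‖f‖ * C)).ultrafilter_le_nhds
      ((Filter.hyperfilter ℕ).map fun N => Λ N f)
      (by
        rw [Filter.le_principal_iff]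
        exact Filter.mem_map.2 (Filter.univ_mem' (hbd f)))
    exact ⟨l, hl⟩
  choose L hL using hlim
  let Φ : CompactlySupportedContinuousMap X ℝ →ₗ[ℝ] ℝ :=
    { toFun := fun f => L f.toContinuousMap
      map_add' := fun f g => by
        refine tendsto_nhds_unique (hL _) ?_
        have := (hL f.toContinuousMap).add (hL g.toContinuousMap)
        refine this.congr fun N => ?_
        rw [← map_add]; rfl
      map_smul' := fun c f => by
        refine tendsto_nhds_unique (hL _) ?_
        have := (hL f.toContinuousMap).const_mul c
        refine this.congr fun N => ?_
        rw [← smul_eq_mul, ← map_smul]; rfl }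
  let Ψ := PositiveLinearMap.mk₀ Φ (fun f hf =>
    ge_of_tendsto (hL f.toContinuousMap) (Filter.Eventually.of_forall fun N => hpos N _ fun x => CompactlySupportedContinuousMap.le_def.1 hf x))
  refine ⟨RealRMK.rieszMeasure Ψ, inferInstance, fun f => ?_⟩
  have := RealRMK.integral_rieszMeasure Ψ (CompactlySupportedContinuousMap.continuousMapEquiv f)
  have h2 : Ψ (CompactlySupportedContinuousMap.continuousMapEquiv f) = L f := rfl
  rw [h2] at this
  have h3 : ∫ x, f x ∂(RealRMK.rieszMeasure Ψ) = L f := this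
  rw [h3]
  exact hL f

/-- The hypercube. -/
def cube (n : ℕ) : Set (Fin n → ℝ) := {x : Fin n → ℝ | ∀ k, x k ∈ Set.Icc (-1 : ℝ) 1}

lemma isCompact_cube (n : ℕ) : IsCompact (cube n) := by
  have : cube n = Set.pi Set.univ fun _ => Set.Icc (-1 : ℝ) 1 := by
    ext; simp only [cube, Set.mem_ofPred_eq, Set.mem_pi, Set.mem_univ, true_imp_iff]
  rw [this]
  exact isCompact_univ_pi fun _ => isCompact_Icc

instance (n : ℕ) : CompactSpace (cube n) := isCompact_iff_compactSpace.1 (isCompact_cube n)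

/-- The affine coordinate with values in `[0,1]`. -/
noncomputable def Yv {n : ℕ} (i : Fin n) : MvPolynomial (Fin n) ℝ :=
  MvPolynomial.C (1 / 2) * (1 + MvPolynomial.X i)

/-- Multivariate Bernstein polynomials on the hypercube. -/
noncomputable def Bpoly {n : ℕ} (N : ℕ) (k : Fin n → Fin (N + 1)) : MvPolynomial (Fin n) ℝ :=
  ∏ i, (((N.choose (k i : ℕ) : ℕ) : MvPolynomial (Fin n) ℝ) * Yv i ^ (k i : ℕ) *
    (1 - Yv i) ^ (N - (k i : ℕ)))

/-- Grid points. -/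
noncomputable def gpt {n : ℕ} (N : ℕ) (k : Fin n → Fin (N + 1)) : cube n :=
  ⟨fun i => 2 * (((k i : ℕ) : ℝ) / N) - 1, fun i => by
    have h1 : (0 : ℝ) ≤ ((k i : ℕ) : ℝ) / N := by positivity
    have h2 : ((k i : ℕ) : ℝ) / N ≤ 1 :=
      div_le_one_of_le₀ (by exact_mod_cast Nat.lt_succ_iff.1 (k i).2) (by positivity)
    constructor <;> linarith⟩

lemma Ysum {n : ℕ} (N : ℕ) (m : Fin n → ℕ) (hm : ∀ i, m i ≤ N) :
    ∏ i, (Yv i : MvPolynomial (Fin n) ℝ) ^ m i =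
      ∑ k : Fin n → Fin (N + 1),
        (∏ i, (((k i : ℕ).choose (m i) : ℝ) / (N.choose (m i) : ℝ))) • Bpoly N k := by
  have h : ∀ i, (Yv i : MvPolynomial (Fin n) ℝ) ^ m i =
      ∑ k : Fin (N + 1), (((k : ℕ).choose (m i) : ℝ) / (N.choose (m i) : ℝ)) •
        (((N.choose (k : ℕ) : ℕ) : MvPolynomial (Fin n) ℝ) * Yv i ^ (k : ℕ) *
          (1 - Yv i) ^ (N - (k : ℕ))) := by
    intro i
    have h1 := bern_univ (Yv i : MvPolynomial (Fin n) ℝ) (1 - Yv i) N (m i) (hm i)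
    rw [add_sub_cancel, one_pow, mul_one, Finset.sum_range] at h1
    have hne : (N.choose (m i) : ℝ) ≠ 0 := by exact_mod_cast (Nat.choose_pos (hm i)).ne'
    have h2 : (Yv i : MvPolynomial (Fin n) ℝ) ^ m i = (N.choose (m i) : ℝ)⁻¹ •
        (((N.choose (m i) : ℕ) : MvPolynomial (Fin n) ℝ) * Yv i ^ m i) := by
      rw [← nsmul_eq_mul, ← Nat.cast_smul_eq_nsmul ℝ, smul_smul, inv_mul_cancel₀ hne, one_smul]
    rw [h2, ← h1, Finset.smul_sum]
    refine Finset.sum_congr rfl fun k _ => ?_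
    rw [← nsmul_eq_mul, ← Nat.cast_smul_eq_nsmul ℝ, smul_smul]
    congr 1
    ring
  simp_rw [h]
  rw [Finset.prod_univ_sum, Fintype.piFinset_univ]
  refine Finset.sum_congr rfl fun k _ => ?_
  rw [Bpoly, Finset.prod_smul]

lemma Bpoly_pos {n : ℕ} (l : MvPolynomial (Fin n) ℝ →ₗ[ℝ] ℝ)
    (hpos : ∀ α : Fin n → ℕ × ℕ, 0 ≤ l (∏ k, ((1 + MvPolynomial.X k) ^ (α k).1 *
      (1 - MvPolynomial.X k) ^ (α k).2))) (N : ℕ) (k : Fin n → Fin (N + 1)) :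
    0 ≤ l (Bpoly N k) := by
  have h : Bpoly N k = (∏ i, ((N.choose (k i : ℕ) : ℝ) * (1 / 2) ^ (k i : ℕ) *
      (1 / 2) ^ (N - (k i : ℕ)))) • ∏ i : Fin n, ((1 + MvPolynomial.X i) ^ (k i : ℕ) *
      (1 - MvPolynomial.X i) ^ (N - (k i : ℕ))) := by
    rw [Bpoly, ← Finset.prod_smul]
    refine Finset.prod_congr rfl fun i _ => ?_
    have h2 : (1 : MvPolynomial (Fin n) ℝ) - Yv i = MvPolynomial.C (1 / 2) * (1 - MvPolynomial.X i) := by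
      have : (1 : MvPolynomial (Fin n) ℝ) = MvPolynomial.C (1 / 2) + MvPolynomial.C (1 / 2) := by
        rw [← map_add]; norm_num
      rw [Yv]
      linear_combination this
    rw [h2, Yv, mul_pow, mul_pow, MvPolynomial.smul_eq_C_mul]
    simp only [map_mul, map_pow, map_natCast]
    ring
  rw [h, map_smul, smul_eq_mul]
  exact mul_nonneg (Finset.prod_nonneg fun i _ => by positivity)
    (hpos fun i => ((k i : ℕ), N - (k i : ℕ)))

lemma Yv_eval {n : ℕ} (N : ℕ) (k : Fin n → Fin (N + 1)) (i : Fin n) :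
    MvPolynomial.eval (gpt N k).1 (Yv i) = ((k i : ℕ) : ℝ) / N := by
  simp only [Yv, gpt, map_mul, map_add, MvPolynomial.eval_C, MvPolynomial.eval_X, map_one]
  ring

lemma conv_Y {n : ℕ} (l : MvPolynomial (Fin n) ℝ →ₗ[ℝ] ℝ)
    (hpos : ∀ α : Fin n → ℕ × ℕ, 0 ≤ l (∏ k, ((1 + MvPolynomial.X k) ^ (α k).1 *
      (1 - MvPolynomial.X k) ^ (α k).2))) (m : Fin n → ℕ) :
    Filter.Tendsto (fun N : ℕ => ∑ k : Fin n → Fin (N + 1),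
      MvPolynomial.eval (gpt N k).1 (∏ i, Yv i ^ m i) * l (Bpoly N k)) Filter.atTop
      (nhds (l (∏ i, Yv i ^ m i))) := by
  rw [tendsto_iff_norm_sub_tendsto_zero]
  have hlim : Filter.Tendsto (fun N : ℕ => (∑ i, (m i : ℝ) * (m i / ((N : ℝ) - m i))) * l 1)
      Filter.atTop (nhds 0) := by
    have : Filter.Tendsto (fun N : ℕ => (∑ i, (m i : ℝ) * (m i / ((N : ℝ) - m i))) * l 1)
      Filter.atTop (nhds ((∑ i, (m i : ℝ) * 0) * l 1)) := by
      refine Filter.Tendsto.mul_const _ (tendsto_finsetSum _ fun i _ => Filter.Tendsto.const_mul _ ?_)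
      refine Filter.Tendsto.const_div_atTop ?_ _
      simp_rw [sub_eq_add_neg]
      exact Filter.tendsto_atTop_add_const_right _ _ tendsto_natCast_atTop_atTop
    simpa using this
  refine squeeze_zero' (Filter.Eventually.of_forall fun _ => norm_nonneg _) ?_ hlim
  filter_upwards [Filter.eventually_gt_atTop (2 * ∑ i, m i)] with N hN
  have hmN : ∀ i, 2 * m i < N := fun i => by
    have := Finset.single_le_sum (f := m) (fun _ _ => Nat.zero_le _) (Finset.mem_univ i)
    omega
  have h1 : l 1 = ∑ k : Fin n → Fin (N + 1), l (Bpoly N k) := by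
    have := Ysum (n := n) N (fun _ => 0) (fun _ => Nat.zero_le _)
    simp only [pow_zero, Finset.prod_const_one, Nat.choose_zero_right, Nat.cast_one, div_one,
      one_smul] at this
    rw [this, map_sum]
  rw [Ysum N m (fun i => by have := hmN i; omega), map_sum, ← Ysum N m (fun i => by have := hmN i; omega),
    ← Finset.sum_sub_distrib, Real.norm_eq_abs, h1, Finset.mul_sum]
  refine (Finset.abs_sum_le_sum_abs _ _).trans (Finset.sum_le_sum fun k _ => ?_)
  rw [map_smul, smul_eq_mul, ← sub_mul, abs_mul, abs_of_nonneg (Bpoly_pos l hpos N k)]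
  refine mul_le_mul_of_nonneg_right ?_ (Bpoly_pos l hpos N k)
  rw [map_prod]
  simp only [map_pow, Yv_eval]
  have hk : ∀ i, (k i : ℕ) ≤ N := fun i => Nat.lt_succ_iff.1 (k i).2
  refine (abs_prod_sub_le _ _ _ ?_ ?_).trans (Finset.sum_le_sum fun i _ => ?_)
  · intro i _
    rw [abs_of_nonneg (by positivity)]
    exact pow_le_one₀ (by positivity)
      (div_le_one_of_le₀ (by exact_mod_cast hk i) (by positivity))
  · intro i _
    rw [abs_of_nonneg (by positivity)]
    exact div_le_one_of_le₀ (by exact_mod_cast Nat.choose_le_choose _ (hk i)) (by positivity)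
  · rw [abs_sub_comm]
    exact choose_ratio_approx N (k i) (m i) (hmN i) (hk i)

lemma conv_all {n : ℕ} (l : MvPolynomial (Fin n) ℝ →ₗ[ℝ] ℝ)
    (hpos : ∀ α : Fin n → ℕ × ℕ, 0 ≤ l (∏ k, ((1 + MvPolynomial.X k) ^ (α k).1 *
      (1 - MvPolynomial.X k) ^ (α k).2))) (p : MvPolynomial (Fin n) ℝ) :
    Filter.Tendsto (fun N : ℕ => ∑ k : Fin n → Fin (N + 1),
      MvPolynomial.eval (gpt N k).1 p * l (Bpoly N k)) Filter.atTop (nhds (l p)) := by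
  have key : ∀ q : MvPolynomial (Fin n) ℝ,
      Filter.Tendsto (fun N : ℕ => ∑ k : Fin n → Fin (N + 1),
      MvPolynomial.eval (gpt N k).1 (MvPolynomial.aeval Yv q) * l (Bpoly N k)) Filter.atTop
      (nhds (l (MvPolynomial.aeval Yv q))) := by
    intro q
    induction q using MvPolynomial.induction_on' with
    | monomial u a =>
      have h : MvPolynomial.aeval Yv (MvPolynomial.monomial u a) =
          a • ∏ i : Fin n, (Yv i : MvPolynomial (Fin n) ℝ) ^ u i := by
        rw [MvPolynomial.aeval_monomial, Algebra.smul_def, Finsupp.prod_fintype]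
        simp
      rw [h, map_smul, smul_eq_mul]
      refine ((conv_Y l hpos u).const_mul a).congr fun N => ?_
      rw [Finset.mul_sum]
      refine Finset.sum_congr rfl fun k _ => ?_
      rw [MvPolynomial.smul_eval]
      ring
    | add p q hp hq =>
      rw [map_add, map_add]
      refine (hp.add hq).congr fun N => ?_
      rw [← Finset.sum_add_distrib]
      refine Finset.sum_congr rfl fun k _ => ?_
      rw [map_add]
      ring
  have h := key (MvPolynomial.aeval (fun i => 2 * MvPolynomial.X i - 1) p)
  have h2 : MvPolynomial.aeval (R := ℝ) (Yv (n := n))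
      (MvPolynomial.aeval (fun i => 2 * MvPolynomial.X i - 1 : Fin n → MvPolynomial (Fin n) ℝ) p) = p := by
    rw [← AlgHom.comp_apply]
    have : (MvPolynomial.aeval (R := ℝ) (Yv (n := n))).comp
      (MvPolynomial.aeval (fun i => 2 * MvPolynomial.X i - 1 : Fin n → MvPolynomial (Fin n) ℝ)) =
        AlgHom.id ℝ _ := by
      ext1 i
      simp only [AlgHom.comp_apply, MvPolynomial.aeval_X, map_sub, map_mul, map_ofNat, map_one,
        AlgHom.id_apply]
      have h3 : (2 : MvPolynomial (Fin n) ℝ) * MvPolynomial.C (1 / 2) = 1 := by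
        rw [← map_ofNat MvPolynomial.C, ← map_mul]; norm_num
      rw [Yv]
      linear_combination (1 + MvPolynomial.X i) * h3
    rw [this]; rfl
  rwa [h2] at h

lemma scalar_hausdorff {n : ℕ} (l : MvPolynomial (Fin n) ℝ →ₗ[ℝ] ℝ)
    (hpos : ∀ α : Fin n → ℕ × ℕ, 0 ≤ l (∏ k, ((1 + MvPolynomial.X k) ^ (α k).1 *
      (1 - MvPolynomial.X k) ^ (α k).2))) :
    ∃ μ : Measure (cube n), IsFiniteMeasure μ ∧
      (∀ p, ∫ x, MvPolynomial.eval x.1 p ∂μ = l p) ∧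
      ∀ f : C(cube n, ℝ), Filter.Tendsto
        (fun N : ℕ => ∑ k : Fin n → Fin (N + 1), f (gpt N k) * l (Bpoly N k))
        (Filter.hyperfilter ℕ) (nhds (∫ x, f x ∂μ)) := by
  let Λ : ℕ → (C(cube n, ℝ) →ₗ[ℝ] ℝ) := fun N =>
    { toFun := fun f => ∑ k : Fin n → Fin (N + 1), f (gpt N k) * l (Bpoly N k)
      map_add' := fun f g => by
        simp [add_mul, Finset.sum_add_distrib]
      map_smul' := fun c f => by
        simp [Finset.mul_sum, mul_assoc] }
  obtain ⟨μ, hμ, h⟩ := ultra_rmk Λ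
    (fun N f hf => Finset.sum_nonneg fun k _ => mul_nonneg (hf _) (Bpoly_pos l hpos N k))
    (l 1) (fun N => by
      have := Ysum (n := n) N (fun _ => 0) (fun _ => Nat.zero_le _)
      simp only [pow_zero, Finset.prod_const_one, Nat.choose_zero_right, Nat.cast_one, div_one,
        one_smul] at this
      rw [this, map_sum]
      simp [Λ])
  refine ⟨μ, hμ, fun p => ?_, h⟩
  have h1 := h ⟨fun x => MvPolynomial.eval x.1 p, (MvPolynomial.continuous_eval p).comp continuous_subtype_val⟩
  exact tendsto_nhds_unique h1 ((conv_all l hpos p).mono_left Nat.hyperfilter_le_atTop)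

/-- A linear combination of finite measures annihilating continuous functions vanishes. -/
lemma comb_zero {ι X : Type*} [Fintype ι] [TopologicalSpace X] [CompactSpace X] [MeasurableSpace X]
    [BorelSpace X] [HasOuterApproxClosed X] (μ : ι → Measure X) [∀ i, IsFiniteMeasure (μ i)]
    (c : ι → ℝ) (h : ∀ f : C(X, ℝ), ∑ i, c i * ∫ x, f x ∂(μ i) = 0) (A : Set X) :
    ∑ i, c i * (μ i).real A = 0 := by
  have hfin : ∀ i (r : NNReal), IsFiniteMeasure (r • μ i) := fun i r => inferInstance
  have key : ∑ i, (c i).toNNReal • μ i = ∑ i, (-c i).toNNReal • μ i := by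
    apply ext_of_forall_integral_eq_of_IsFiniteMeasure
    intro f
    have hintg : ∀ i (r : NNReal), Integrable f (r • μ i) := fun i r => f.integrable _
    rw [integral_finsetSum_measure fun i _ => hintg i _, integral_finsetSum_measure fun i _ => hintg i _,
      ← sub_eq_zero, ← Finset.sum_sub_distrib, ← h f.toContinuousMap]
    refine Finset.sum_congr rfl fun i _ => ?_
    rw [integral_smul_nnreal_measure, integral_smul_nnreal_measure, NNReal.smul_def, NNReal.smul_def,
      ← sub_smul, Real.coe_toNNReal', Real.coe_toNNReal', max_zero_sub_max_neg_zero_eq_self]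
    rfl
  have h2 := congrArg (fun m : Measure X => m.real A) key
  have h3 : ∀ r : ι → NNReal, (∑ i, r i • μ i).real A = ∑ i, (r i : ℝ) * (μ i).real A := by
    intro r
    simp only [measureReal_def, Measure.finsetSum_apply, Measure.smul_apply]
    rw [ENNReal.toReal_sum]
    · simp
    · intro i _
      exact measure_ne_top (r i • μ i) A
  simp only [h3] at h2
  rw [← sub_eq_zero, ← Finset.sum_sub_distrib] at h2
  rw [← h2]
  refine Finset.sum_congr rfl fun i _ => ?_
  rw [← sub_mul, Real.coe_toNNReal', Real.coe_toNNReal', max_zero_sub_max_neg_zero_eq_self]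

/-- A linear combination of finite measures that is nonnegative on sets is nonnegative on
functions. -/
lemma comb_nonneg {ι X : Type*} [Fintype ι] [MeasurableSpace X] (μ : ι → Measure X)
    [∀ i, IsFiniteMeasure (μ i)]
    (c : ι → ℝ) (h : ∀ A, MeasurableSet A → 0 ≤ ∑ i, c i * (μ i).real A) (f : X → ℝ)
    (hf : ∀ i, Integrable f (μ i)) (hf0 : ∀ i, ∀ᵐ x ∂(μ i), 0 ≤ f x) :
    0 ≤ ∑ i, c i * ∫ x, f x ∂(μ i) := by
  have h3 : ∀ (r : ι → NNReal) A, (∑ i, r i • μ i).real A = ∑ i, (r i : ℝ) * (μ i).real A := by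
    intro r A
    simp only [measureReal_def, Measure.finsetSum_apply, Measure.smul_apply]
    rw [ENNReal.toReal_sum]
    · simp
    · intro i _
      exact measure_ne_top (r i • μ i) A
  have key : ∑ i, (-c i).toNNReal • μ i ≤ ∑ i, (c i).toNNReal • μ i := by
    refine Measure.le_iff.2 fun A hA => ?_
    rw [← ENNReal.toReal_le_toReal (measure_ne_top _ _) (measure_ne_top _ _)]
    change Measure.real _ A ≤ Measure.real _ A
    rw [h3, h3, ← sub_nonneg, ← Finset.sum_sub_distrib]
    refine (h A hA).trans_eq (Finset.sum_congr rfl fun i _ => ?_)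
    rw [← sub_mul, Real.coe_toNNReal', Real.coe_toNNReal', max_zero_sub_max_neg_zero_eq_self]
  have hintg : ∀ i (r : NNReal), Integrable f (r • μ i) := fun i r => (hf i).smul_measure_nnreal
  have h1 : ∫ x, f x ∂(∑ i, (-c i).toNNReal • μ i) ≤ ∫ x, f x ∂(∑ i, (c i).toNNReal • μ i) := by
    refine integral_mono_measure key ?_ (integrable_finsetSum_measure.2 fun i _ => hintg i _)
    rw [Filter.EventuallyLE, ae_iff, Measure.finsetSum_apply]
    refine Finset.sum_eq_zero fun i _ => ?_
    rw [Measure.smul_apply]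
    have : (μ i) {a | ¬ (0 : X → ℝ) a ≤ f a} = 0 := hf0 i
    rw [this, smul_zero]
  rw [integral_finsetSum_measure fun i _ => hintg i _, integral_finsetSum_measure fun i _ => hintg i _,
      ← sub_nonneg, ← Finset.sum_sub_distrib] at h1
  refine h1.trans_eq (Finset.sum_congr rfl fun i _ => ?_)
  rw [integral_smul_nnreal_measure, integral_smul_nnreal_measure, NNReal.smul_def, NNReal.smul_def,
      ← sub_smul, Real.coe_toNNReal', Real.coe_toNNReal', max_zero_sub_max_neg_zero_eq_self]
  rfl

lemma trace_psd {t : ℕ} {G M : Matrix (Fin t) (Fin t) ℝ} (hG : G.PosSemidef) (hM : M.PosSemidef) :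
    0 ≤ (G * M).trace := by
  obtain ⟨m, A, rfl⟩ := Matrix.posSemidef_iff_eq_sum_vecMulVec.mp hG
  rw [Finset.sum_mul, Matrix.trace_sum]
  refine Finset.sum_nonneg fun i _ => ?_
  rw [Matrix.vecMulVec_mul, Matrix.trace_vecMulVec, dotProduct_comm, ← Matrix.dotProduct_mulVec]
  exact hM.dotProduct_mulVec_nonneg (A i)

lemma integrable_cube {n : ℕ} (μ : Measure (Fin n → ℝ)) [IsFiniteMeasure μ]
    (hμ : μ (cube n)ᶜ = 0) (f : (Fin n → ℝ) → ℝ) (hf : Continuous f) : Integrable f μ := by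
  have h : μ.restrict (cube n) = μ := Measure.restrict_eq_self_of_ae_mem (by rwa [ae_iff])
  rw [← h]
  exact hf.continuousOn.integrableOn_compact (isCompact_cube n)

lemma sInt_sub {X : Type*} [MeasurableSpace X] (μ ν : Measure X) [IsFiniteMeasure μ]
    [IsFiniteMeasure ν] (f : X → ℝ) (hμ : Integrable f μ) (hν : Integrable f ν) :
    sInt (μ.toSignedMeasure - ν.toSignedMeasure) f = ∫ x, f x ∂μ - ∫ x, f x ∂ν := by
  rw [sInt, Measure.toJordanDecomposition_toSignedMeasure_sub,
    Measure.jordanDecompositionOfToSignedMeasureSub_posPart,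
    Measure.jordanDecompositionOfToSignedMeasureSub_negPart]
  have h1 : (μ - ν) + ν = (ν - μ) + μ := by
    have h := Measure.sub_toSignedMeasure_eq_toSignedMeasure_sub (μ := μ) (ν := ν)
    rw [← Measure.toSignedMeasure_eq_toSignedMeasure_iff, Measure.toSignedMeasure_add,
      Measure.toSignedMeasure_add, ← sub_eq_zero]
    rw [← sub_eq_zero] at h
    rw [← neg_eq_zero, ← h]
    abel
  have h2 := congrArg (fun m : Measure X => ∫ x, f x ∂m) h1
  rw [integral_add_measure (hμ.mono_measure Measure.sub_le) hν,
    integral_add_measure (hν.mono_measure Measure.sub_le) hμ] at h2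
  linarith

/-- The functional on polynomials attached to `G` and the sequence `S`. -/
noncomputable def lfun {n t : ℕ} (S : (Fin n → ℕ) → Matrix (Fin t) (Fin t) ℝ) :
    Matrix (Fin t) (Fin t) ℝ →ₗ[ℝ] (MvPolynomial (Fin n) ℝ →ₗ[ℝ] ℝ) where
  toFun G := (MvPolynomial.basisMonomials (Fin n) ℝ).constr ℝ fun m => (G * S m).trace
  map_add' G H := by
    rw [← map_add]
    congr 1
    ext m
    simp [add_mul]
  map_smul' c G := by
    rw [← map_smul]
    congr 1
    ext m
    simp

lemma lfun_mon {n t : ℕ} (S : (Fin n → ℕ) → Matrix (Fin t) (Fin t) ℝ)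
    (G : Matrix (Fin t) (Fin t) ℝ) (γ : Fin n → ℕ) :
    lfun S G (∏ k, MvPolynomial.X k ^ γ k) = (G * S γ).trace := by
  have h : (∏ k, MvPolynomial.X k ^ γ k : MvPolynomial (Fin n) ℝ) =
      MvPolynomial.basisMonomials (Fin n) ℝ (Finsupp.equivFunOnFinite.symm γ) := by
    rw [MvPolynomial.coe_basisMonomials]
    beta_reduce
    rw [MvPolynomial.monomial_eq, Finsupp.prod_fintype]
    · simp
    · simp
  rw [h]
  simp only [lfun, LinearMap.coe_mk, AddHom.coe_mk]
  rw [Module.Basis.constr_basis]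
  rfl

lemma lfun_prod {n t : ℕ} (S : (Fin n → ℕ) → Matrix (Fin t) (Fin t) ℝ)
    (G : Matrix (Fin t) (Fin t) ℝ) (α : Fin n → ℕ × ℕ) :
    lfun S G (∏ k, ((1 + MvPolynomial.X k) ^ (α k).1 * (1 - MvPolynomial.X k) ^ (α k).2)) =
      ∑ β ∈ Finset.Iic α,
          (-1 : ℝ) ^ (∑ k, (β k).2) *
            (∏ k, ((α k).1.choose (β k).1 : ℝ) * ((α k).2.choose (β k).2 : ℝ)) *
            (G * S (fun k => (β k).1 + (β k).2)).trace := by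
  rw [expand_prod, map_sum]
  refine Finset.sum_congr rfl fun β _ => ?_
  rw [← lfun_mon, ← smul_eq_mul (a := (_ * _ : ℝ)) (b := lfun S G _), ← map_smul, MvPolynomial.smul_eq_C_mul]
  congr 2
  simp

lemma forward {n t : ℕ} (S : (Fin n → ℕ) → Matrix (Fin t) (Fin t) ℝ)
    (h : IsMatMomentSeq S (cube n)) (G : Matrix (Fin t) (Fin t) ℝ) (hG : G.PosDef)
    (α : Fin n → ℕ × ℕ) : 0 ≤ ∑ β ∈ Finset.Iic α,
          (-1 : ℝ) ^ (∑ k, (β k).2) *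
            (∏ k, ((α k).1.choose (β k).1 : ℝ) * ((α k).2.choose (β k).2 : ℝ)) *
            (G * S (fun k => (β k).1 + (β k).2)).trace := by
  obtain ⟨E, hE, hsupp, hmom⟩ := h
  let μ : (Fin t × Fin t) × Bool → Measure (Fin n → ℝ) := fun q =>
    if q.2 then (E q.1.2 q.1.1).toJordanDecomposition.posPart
    else (E q.1.2 q.1.1).toJordanDecomposition.negPart
  let c : (Fin t × Fin t) × Bool → ℝ := fun q => if q.2 then G q.1.1 q.1.2 else -G q.1.1 q.1.2
  have hfin : ∀ q, IsFiniteMeasure (μ q) := by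
    rintro ⟨⟨i, j⟩, b⟩
    cases b <;> simp only [μ] <;> simp only [if_true, if_false, Bool.false_eq_true] <;> infer_instance
  have hK : ∀ q, (μ q) (cube n)ᶜ = 0 := by
    rintro ⟨⟨i, j⟩, b⟩
    have h := hsupp j i
    rw [SignedMeasure.totalVariation, Measure.add_apply, add_eq_zero] at h
    cases b
    · exact h.2
    · exact h.1
  have hpos : ∀ A, MeasurableSet A → 0 ≤ ∑ q, c q * (μ q).real A := by
    intro A hA
    refine (trace_psd hG.posSemidef (hE A hA)).trans_eq ?_
    simp only [Matrix.trace, Matrix.diag_apply, Matrix.mul_apply, Matrix.of_apply,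
      Fintype.sum_prod_type, Fintype.sum_bool]
    refine Finset.sum_congr rfl fun i _ => Finset.sum_congr rfl fun j _ => ?_
    rw [SignedMeasure.apply_eq_posPart_real_sub_negPart_real _ hA]
    simp only [c, μ, if_true, if_false, Bool.false_eq_true]
    ring
  have hcont : ∀ γ : Fin n → ℕ, Continuous fun x : Fin n → ℝ => ∏ k, x k ^ γ k := fun γ => by
    fun_prop
  have key := comb_nonneg μ c hpos
    (fun x => ∏ k, ((1 + x k) ^ (α k).1 * (1 - x k) ^ (α k).2))
    (fun q => integrable_cube _ (hK q) _ (by fun_prop))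
    (fun q => by
      have : ∀ᵐ x ∂(μ q), x ∈ cube n := by rw [ae_iff]; exact hK q
      filter_upwards [this] with x hx
      refine Finset.prod_nonneg fun k _ => ?_
      have h1 := (hx k).1
      have h2 := (hx k).2
      exact mul_nonneg (pow_nonneg (by linarith) _) (pow_nonneg (by linarith) _))
  refine key.trans_eq ?_
  have hmomT : ∀ γ, (G * S γ).trace = ∑ q, c q * ∫ x, ∏ k, x k ^ γ k ∂(μ q) := by
    intro γ
    simp only [Matrix.trace, Matrix.diag_apply, Matrix.mul_apply, hmom, sInt,
      Fintype.sum_prod_type, Fintype.sum_bool]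
    refine Finset.sum_congr rfl fun i _ => Finset.sum_congr rfl fun j _ => ?_
    simp only [c, μ, if_true, if_false, Bool.false_eq_true]
    ring
  simp_rw [hmomT, Finset.mul_sum]
  rw [Finset.sum_comm]
  refine Finset.sum_congr rfl fun q _ => ?_
  simp_rw [expand_prod]
  rw [integral_finsetSum]
  · rw [Finset.mul_sum]
    refine Finset.sum_congr rfl fun β _ => ?_
    rw [integral_const_mul]
    ring
  · intro β _
    exact (integrable_cube _ (hK q) _ (hcont _)).const_mul _

lemma pos_vec {n t : ℕ} (S : (Fin n → ℕ) → Matrix (Fin t) (Fin t) ℝ)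
    (h : ∀ G : Matrix (Fin t) (Fin t) ℝ, G.PosDef → ∀ α : Fin n → ℕ × ℕ,
      0 ≤ lfun S G (∏ k, ((1 + MvPolynomial.X k) ^ (α k).1 * (1 - MvPolynomial.X k) ^ (α k).2)))
    (v : Fin t → ℝ) (α : Fin n → ℕ × ℕ) :
    0 ≤ lfun S (Matrix.vecMulVec v v)
      (∏ k, ((1 + MvPolynomial.X k) ^ (α k).1 * (1 - MvPolynomial.X k) ^ (α k).2)) := by
  set p : MvPolynomial (Fin n) ℝ :=
    ∏ k, ((1 + MvPolynomial.X k) ^ (α k).1 * (1 - MvPolynomial.X k) ^ (α k).2)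
  have h1 : ∀ ε : ℝ, 0 < ε → 0 ≤ lfun S (Matrix.vecMulVec v v) p + ε * lfun S 1 p := by
    intro ε hε
    have hpd : (Matrix.vecMulVec v v + ε • (1 : Matrix (Fin t) (Fin t) ℝ)).PosDef :=
      Matrix.PosDef.posSemidef_add (by simpa using Matrix.posSemidef_vecMulVec_self_star v)
        (Matrix.PosDef.one.smul hε)
    have := h _ hpd α
    simpa using this
  have h2 : Filter.Tendsto (fun ε : ℝ => lfun S (Matrix.vecMulVec v v) p + ε * lfun S 1 p)
      (nhdsWithin 0 (Set.Ioi 0)) (nhds (lfun S (Matrix.vecMulVec v v) p + 0 * lfun S 1 p)) := by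
    refine Filter.Tendsto.mono_left ?_ nhdsWithin_le_nhds
    exact Continuous.tendsto (by fun_prop) 0
  rw [zero_mul, add_zero] at h2
  exact ge_of_tendsto h2 (Filter.eventually_of_mem self_mem_nhdsWithin fun ε hε => h1 ε hε)

lemma backward {n t : ℕ} (S : (Fin n → ℕ) → Matrix (Fin t) (Fin t) ℝ) (hS : ∀ α, (S α).IsSymm)
    (h : ∀ G : Matrix (Fin t) (Fin t) ℝ, G.PosDef → ∀ α : Fin n → ℕ × ℕ,
      0 ≤ lfun S G (∏ k, ((1 + MvPolynomial.X k) ^ (α k).1 * (1 - MvPolynomial.X k) ^ (α k).2))) :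
    IsMatMomentSeq S (cube n) := by
  have hex : ∀ G : Matrix (Fin t) (Fin t) ℝ, ∃ μ : Measure (cube n), IsFiniteMeasure μ ∧
      ((∃ v, G = Matrix.vecMulVec v v) → (∀ p, ∫ x, MvPolynomial.eval x.1 p ∂μ = lfun S G p) ∧
      ∀ f : C(cube n, ℝ), Filter.Tendsto
        (fun N : ℕ => ∑ k : Fin n → Fin (N + 1), f (gpt N k) * lfun S G (Bpoly N k))
        (Filter.hyperfilter ℕ) (nhds (∫ x, f x ∂μ))) := by
    intro G
    by_cases hG : ∃ v, G = Matrix.vecMulVec v v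
    · obtain ⟨v, rfl⟩ := hG
      obtain ⟨μ, h1, h2⟩ := scalar_hausdorff (lfun S (Matrix.vecMulVec v v)) (pos_vec S h v)
      exact ⟨μ, h1, fun _ => h2⟩
    · exact ⟨0, inferInstance, fun h => absurd h hG⟩
  choose M hfin hM using hex
  let P : Fin t → Fin t → Matrix (Fin t) (Fin t) ℝ := fun i j =>
    Matrix.vecMulVec (Pi.single i 1 + Pi.single j 1) (Pi.single i 1 + Pi.single j 1)
  let Q : Fin t → Fin t → Matrix (Fin t) (Fin t) ℝ := fun i j =>
    Matrix.vecMulVec (Pi.single i 1 - Pi.single j 1) (Pi.single i 1 - Pi.single j 1)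
  have hP : ∀ i j, P i j = P j i := fun i j => by simp only [P]; rw [add_comm]
  have hQ : ∀ i j, Q i j = Q j i := fun i j => by
    simp only [Q]
    rw [← neg_sub, Matrix.neg_vecMulVec, Matrix.vecMulVec_neg, neg_neg]
  let m : Matrix (Fin t) (Fin t) ℝ → Measure (Fin n → ℝ) := fun G =>
    (1 / 4 : NNReal) • (M G).map Subtype.val
  have hmfin : ∀ G, IsFiniteMeasure (m G) := fun G => inferInstance
  have hKmeas : MeasurableSet (cube n) := (isCompact_cube n).isClosed.measurableSet
  have hmK : ∀ G, m G (cube n)ᶜ = 0 := by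
    intro G
    simp only [m, Measure.smul_apply]
    rw [Measure.map_apply measurable_subtype_coe hKmeas.compl]
    have : (Subtype.val ⁻¹' (cube n)ᶜ : Set (cube n)) = ∅ := by
      ext x; simp
    rw [this, measure_empty, smul_zero]
  have hmreal : ∀ G A, MeasurableSet A → (m G).real A = 1 / 4 * (M G).real (Subtype.val ⁻¹' A) := by
    intro G A hA
    simp only [m]
    rw [measureReal_nnreal_smul_apply, map_measureReal_apply measurable_subtype_coe hA]
    simp
  have hmint : ∀ G (p : MvPolynomial (Fin n) ℝ), (∃ v, G = Matrix.vecMulVec v v) →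
      ∫ x, MvPolynomial.eval x p ∂(m G) = 1 / 4 * lfun S G p := by
    intro G p hG
    simp only [m]
    rw [integral_smul_nnreal_measure, integral_map measurable_subtype_coe.aemeasurable
      (MvPolynomial.continuous_eval p).aestronglyMeasurable, (hM G hG).1 p, NNReal.smul_def]
    simp
  refine ⟨fun i j => (m (P i j)).toSignedMeasure - (m (Q i j)).toSignedMeasure, ?_, ?_, ?_⟩
  · intro A hA
    have hval : ∀ i j, ((m (P i j)).toSignedMeasure - (m (Q i j)).toSignedMeasure) A =
        1 / 4 * (M (P i j)).real (Subtype.val ⁻¹' A) -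
          1 / 4 * (M (Q i j)).real (Subtype.val ⁻¹' A) := by
      intro i j
      rw [Measure.toSignedMeasure_sub_apply hA, hmreal _ _ hA, hmreal _ _ hA]
    refine Matrix.PosSemidef.of_dotProduct_mulVec_nonneg ?_ fun v => ?_
    · ext i j
      simp only [Matrix.conjTranspose_apply, Matrix.of_apply, star_trivial]
      simp only [hval, hP i j, hQ i j]
    · let V := Matrix.vecMulVec v v
      let G : Option ((Fin t × Fin t) × Bool) → Matrix (Fin t) (Fin t) ℝ := fun q =>
        match q with
        | none => V
        | some (ij, true) => P ij.1 ij.2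
        | some (ij, false) => Q ij.1 ij.2
      let c : Option ((Fin t × Fin t) × Bool) → ℝ := fun q =>
        match q with
        | none => -1
        | some (ij, true) => v ij.1 * v ij.2 / 4
        | some (ij, false) => -(v ij.1 * v ij.2 / 4)
      have hGv : ∀ q, ∃ w, G q = Matrix.vecMulVec w w := by
        rintro (_ | ⟨ij, _ | _⟩)
        · exact ⟨_, rfl⟩
        · exact ⟨_, rfl⟩
        · exact ⟨_, rfl⟩
      have hcG : ∑ q, c q • G q = 0 := by
        ext a b
        simp only [Matrix.sum_apply, Matrix.smul_apply, Fintype.sum_option, Fintype.sum_prod_type,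
          Fintype.sum_bool, c, G, V, P, Q, Matrix.vecMulVec_apply, smul_eq_mul, Pi.add_apply,
          Pi.sub_apply, Matrix.zero_apply]
        have : ∀ i j, v i * v j / 4 * (((Pi.single i 1 : Fin t → ℝ) a + (Pi.single j 1 : Fin t → ℝ) a) *
            ((Pi.single i 1 : Fin t → ℝ) b + (Pi.single j 1 : Fin t → ℝ) b)) +
            -(v i * v j / 4) * (((Pi.single i 1 : Fin t → ℝ) a - (Pi.single j 1 : Fin t → ℝ) a) *
            ((Pi.single i 1 : Fin t → ℝ) b - (Pi.single j 1 : Fin t → ℝ) b)) =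
            (1 / 2) * ((v i * (Pi.single i 1 : Fin t → ℝ) a) * (v j * (Pi.single j 1 : Fin t → ℝ) b)) +
            (1 / 2) * ((v i * (Pi.single i 1 : Fin t → ℝ) b) * (v j * (Pi.single j 1 : Fin t → ℝ) a)) := by
          intro i j; ring
        simp_rw [this, Finset.sum_add_distrib, ← Finset.mul_sum, ← Finset.sum_mul]
        simp [Pi.single_apply]
        ring
      have hz := comb_zero (fun q => M (G q)) c (fun f => by
        have hl : Filter.Tendsto (fun N : ℕ => ∑ q, c q *
            ∑ k : Fin n → Fin (N + 1), f (gpt N k) * lfun S (G q) (Bpoly N k))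
            (Filter.hyperfilter ℕ) (nhds (∑ q, c q * ∫ x, f x ∂(M (G q)))) :=
          tendsto_finsetSum _ fun q _ => ((hM _ (hGv q)).2 f).const_mul _
        refine tendsto_nhds_unique hl ?_
        refine tendsto_const_nhds.congr fun N => ?_
        simp_rw [Finset.mul_sum]
        rw [Finset.sum_comm]
        symm
        refine Finset.sum_eq_zero fun k _ => ?_
        have h0 : lfun S (∑ q, c q • G q) (Bpoly N k) = 0 := by rw [hcG]; simp
        rw [map_sum, LinearMap.sum_apply] at h0
        rw [← mul_zero (f (gpt N k)), ← h0, Finset.mul_sum]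
        refine Finset.sum_congr rfl fun q _ => ?_
        rw [map_smul, LinearMap.smul_apply, smul_eq_mul]
        ring) (Subtype.val ⁻¹' A)
      simp only [Fintype.sum_option, Fintype.sum_prod_type, Fintype.sum_bool, c, G] at hz
      have hnn : 0 ≤ (M V).real (Subtype.val ⁻¹' A) := measureReal_nonneg
      refine hnn.trans_eq ?_
      simp only [dotProduct, Matrix.mulVec, Matrix.of_apply, hval, Finset.mul_sum, star_trivial]
      rw [neg_one_mul, neg_add_eq_zero] at hz
      rw [hz]
      refine Finset.sum_congr rfl fun i _ => Finset.sum_congr rfl fun j _ => ?_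
      ring
  · intro i j
    rw [SignedMeasure.totalVariation, Measure.toJordanDecomposition_toSignedMeasure_sub,
      Measure.jordanDecompositionOfToSignedMeasureSub_posPart,
      Measure.jordanDecompositionOfToSignedMeasureSub_negPart, Measure.add_apply]
    have h1 : (m (P i j) - m (Q i j)) (cube n)ᶜ = 0 :=
      le_antisymm ((Measure.sub_le _).trans_eq (hmK _)) bot_le
    have h2 : (m (Q i j) - m (P i j)) (cube n)ᶜ = 0 :=
      le_antisymm ((Measure.sub_le _).trans_eq (hmK _)) bot_le
    rw [h1, h2, add_zero]
  · intro α i j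
    have hev : (fun x : Fin n → ℝ => ∏ k, x k ^ α k) =
        fun x => MvPolynomial.eval x (∏ k, MvPolynomial.X k ^ α k) := by
      ext x; simp
    rw [hev, sInt_sub _ _ _ (integrable_cube _ (hmK _) _ (MvPolynomial.continuous_eval _))
      (integrable_cube _ (hmK _) _ (MvPolynomial.continuous_eval _)),
      hmint _ _ ⟨_, rfl⟩, hmint _ _ ⟨_, rfl⟩, lfun_mon, lfun_mon]
    simp only [P, Q, Matrix.vecMulVec_mul, Matrix.trace_vecMulVec]
    simp only [add_dotProduct, sub_dotProduct, single_one_dotProduct, Matrix.add_vecMul,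
      Matrix.sub_vecMul, Matrix.single_one_vecMul, Pi.add_apply, Pi.sub_apply, Matrix.row_apply]
    have := (hS α).apply i j
    linarith

/-- a sequence `S` of symmetric matrices is a matrix-valued `[-1,1]ⁿ`-moment
sequence iff `Σ_{β ≤ α} (-1)^{e(β)} C(α,β) tr(G S_{π(β)}) ≥ 0` for all positive definite
`G` and all `α ∈ ℕ₀^{2n}`. Multi-indices in `ℕ₀^{2n}` are encoded as `Fin n → ℕ × ℕ`
(odd-indexed entries first components, even-indexed entries second components), so
`e(β) = Σ_k (β k).2`, `C(α,β) = ∏_k C((α k).1,(β k).1) C((α k).2,(β k).2)` and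
`π(β) = (fun k => (β k).1 + (β k).2)`. -/
theorem matMomentSeq_hypercube_iff (n t : ℕ)
    (S : (Fin n → ℕ) → Matrix (Fin t) (Fin t) ℝ) (hS : ∀ α, (S α).IsSymm) :
    IsMatMomentSeq S {x : Fin n → ℝ | ∀ k, x k ∈ Set.Icc (-1 : ℝ) 1} ↔
      ∀ G : Matrix (Fin t) (Fin t) ℝ, G.PosDef → ∀ α : Fin n → ℕ × ℕ,
        0 ≤ ∑ β ∈ Finset.Iic α,
          (-1 : ℝ) ^ (∑ k, (β k).2) *
            (∏ k, ((α k).1.choose (β k).1 : ℝ) * ((α k).2.choose (β k).2 : ℝ)) *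
            (G * S (fun k => (β k).1 + (β k).2)).trace := by
  change IsMatMomentSeq S (cube n) ↔ _
  constructor
  · exact fun h G hG α => forward S h G hG α
  · intro h
    exact backward S hS fun G hG α => by rw [lfun_prod]; exact h G hG α
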